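/- arXiv:1403.6863 — 4 statements merged into one kernel-verified Lean document; each statement's English description precedes it below -/
import Mathlib

section
/- Let d ≥ 1 and n = 2^d, and let a_1,…,a_n ∈ {0,1}^d be an enumeration of all 2^d Boolean vectors of length d (i.e., the map t ↦ a_t is a bijection onto {0,1}^d). Then for every function ρ : {0,1}^n → ℝ with ρ(x) ≥ 0 for all x and Σ_{x∈{0,1}^n} ρ(x) ≤ 1, there exists a subset S ⊆ {1,…,d} such that the target sequence x^S defined by x^S_t = h_S(a_t) satisfies ρ(x^S) ≤ 2^{−d}; consequently the cumulative log-loss −log₂ ρ(x^S) is at least d. -/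
/-! Since `a` hits every Boolean vector, it hits the indicator vector of each `S`, and
`mconj T` is true there exactly when `T ⊆ S`. Hence distinct sets give distinct target sequences
(`mconj_seq_injective`), so the `2 ^ d` conjunctions label `2 ^ d` different sequences. Their
total `ρ`-mass is at most `1`, so by averaging one of them has mass at most `2 ^ (-d)`. -/

/-- The monotone conjunction hypothesis `h_S(a) = ⋀_{i ∈ S} a^i`. -/
def mconj {d : ℕ} (S : Finset (Fin d)) (a : Fin d → Bool) : Bool :=
  decide (∀ i ∈ S, a i = true)

theorem mconj_indicator {d : ℕ} (S T : Finset (Fin d)) :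
    mconj T (fun i => decide (i ∈ S)) = true ↔ T ⊆ S := by
  simp [mconj, Finset.subset_iff]

theorem mconj_seq_injective {d : ℕ} {ι : Type*} (a : ι → (Fin d → Bool))
    (ha : Function.Surjective a) :
    Function.Injective (fun (S : Finset (Fin d)) (t : ι) => mconj S (a t)) := by
  intro S T h
  have key : ∀ U : Finset (Fin d), S ⊆ U ↔ T ⊆ U := by
    intro U
    obtain ⟨t, ht⟩ := ha (fun i => decide (i ∈ U))
    have h1 : mconj S (a t) = mconj T (a t) := congrFun h t
    rw [ht] at h1
    rw [← mconj_indicator, ← mconj_indicator, h1]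
  exact Finset.Subset.antisymm ((key T).2 subset_rfl) ((key S).1 subset_rfl)

theorem stmt_2 (d : ℕ) (hd : 1 ≤ d)
    (a : Fin (2 ^ d) → (Fin d → Bool)) (ha : Function.Bijective a)
    (ρ : (Fin (2 ^ d) → Bool) → ℝ)
    (hρ0 : ∀ x, 0 ≤ ρ x) (hρ1 : ∑ x, ρ x ≤ 1) :
    ∃ S : Finset (Fin d),
      ρ (fun t => mconj S (a t)) ≤ ((2 : ℝ) ^ d)⁻¹ ∧
      (ρ (fun t => mconj S (a t)) ≠ 0 →
        (d : ℝ) ≤ - Real.logb 2 (ρ (fun t => mconj S (a t)))) := by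
  have hsum : ∑ S : Finset (Fin d), ρ (fun t => mconj S (a t)) ≤ 1 := by
    refine le_trans ?_ hρ1
    rw [← Finset.sum_image (f := ρ) (mconj_seq_injective a ha.surjective).injOn]
    exact Finset.sum_le_sum_of_subset_of_nonneg (Finset.subset_univ _) fun x _ _ => hρ0 x
  obtain ⟨S, -, hS⟩ : ∃ S ∈ (Finset.univ : Finset (Finset (Fin d))),
      ρ (fun t => mconj S (a t)) ≤ ((2 : ℝ) ^ d)⁻¹ := by
    apply Finset.exists_le_of_sum_le Finset.univ_nonempty
    simpa using hsum
  refine ⟨S, hS, fun hne => ?_⟩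
  have hpos := lt_of_le_of_ne (hρ0 _) hne.symm
  have hlog := Real.logb_le_logb_of_le one_lt_two hpos hS
  rw [Real.logb_inv, Real.logb_pow, Real.logb_self_eq_one one_lt_two, mul_one] at hlog
  linarith
end

section
/- Let d ≥ 2 and n ≥ 1 be integers, let a_1,…,a_n ∈ {0,1}^d, and suppose x_1,…,x_n ∈ {0,1} are generated by a monotone conjunction: there exists S* ⊆ {1,…,d} with x_t = h_{S*}(a_t) for all t. Set α := 2^{−d/2^d}. For each t define D_t := {i ∈ {1,…,d} : a_τ^i = 1 for every τ < t with x_τ = 1}, A_t := {a_τ : τ < t, x_τ = 0}, q_t := ∏_{i∈D_t} ((1−α) + α·a_t^i), and the predicted probability p_t := [x_t = 0] if a_t ∈ A_t, p_t := q_t if a_t ∉ A_t and x_t = 1, and p_t := 1 − q_t if a_t ∉ A_t and x_t = 0. Then the cumulative log-loss satisfies Σ_{t=1}^n −log₂ p_t ≤ 2d². -/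
theorem conj_one_sub_alpha_ge (d : ℕ) (hd : 2 ≤ d) :
    (2 : ℝ) ^ (-(d : ℝ)) ≤ 1 - (2 : ℝ) ^ (-((d : ℝ) / 2 ^ d)) := by
  have hd' : (2 : ℝ) ≤ d := by exact_mod_cast hd
  have hpos : (0 : ℝ) < 2 ^ d := by positivity
  have hlt : (d : ℝ) ≤ 2 ^ d := by exact_mod_cast (Nat.lt_two_pow_self (n := d)).le
  have hu1 : (d : ℝ) / 2 ^ d ≤ 1 := (div_le_one hpos).2 hlt
  -- `(1 - 1/2)^u ≤ 1 - u/2` for the exponent `u = d / 2^d ∈ [0, 1]`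
  have hb := rpow_one_add_le_one_add_mul_self (s := (-1 / 2 : ℝ)) (by norm_num)
    (show 0 ≤ (d : ℝ) / 2 ^ d by positivity) hu1
  have e1 : (1 + (-1 / 2) : ℝ) = 2⁻¹ := by norm_num
  rw [e1, Real.inv_rpow (by norm_num), ← Real.rpow_neg (by norm_num)] at hb
  have e2 : (2 : ℝ) ^ (-(d : ℝ)) = 1 / 2 ^ d := by
    rw [Real.rpow_neg (by norm_num), Real.rpow_natCast, one_div]
  have h3 : 2 / (2 : ℝ) ^ d ≤ d / 2 ^ d := by gcongr
  have h4 : 2 / (2 : ℝ) ^ d = 2 * (1 / 2 ^ d) := by ring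
  rw [e2]
  linarith

theorem stmt_16 (d n : ℕ) (hd : 2 ≤ d) (hn : 1 ≤ n)
    (a : Fin n → Fin d → Bool) (x : Fin n → Bool)
    (hgen : ∃ Sstar : Finset (Fin d), ∀ t, x t = mconj Sstar (a t))
    (α : ℝ) (hαdef : α = (2 : ℝ) ^ (-((d : ℝ) / 2 ^ d)))
    (D : Fin n → Finset (Fin d))
    (hD : ∀ t, D t = Finset.univ.filter
        (fun i : Fin d => ∀ τ, τ < t → x τ = true → a τ i = true))
    (q : Fin n → ℝ)
    (hq : ∀ t, q t = ∏ i ∈ D t, ((1 - α) + α * (if a t i then (1 : ℝ) else 0)))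
    (p : Fin n → ℝ)
    (hp : ∀ t, p t =
      if ∃ τ, τ < t ∧ x τ = false ∧ a τ = a t then
        (if x t = false then 1 else 0)
      else if x t = true then q t else 1 - q t) :
    ∑ t : Fin n, (- Real.logb 2 (p t)) ≤ 2 * (d : ℝ) ^ 2 := by
  classical
  obtain ⟨S, hS⟩ := hgen
  have hd' : (2 : ℝ) ≤ d := by exact_mod_cast hd
  have hpos : (0 : ℝ) < 2 ^ d := by positivity
  have hα0 : 0 < α := by rw [hαdef]; positivity
  have hβ : (2 : ℝ) ^ (-(d : ℝ)) ≤ 1 - α := by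
    rw [hαdef]; exact conj_one_sub_alpha_ge d hd
  have hβ0 : 0 < 1 - α := lt_of_lt_of_le (by positivity) hβ
  have hlogα : Real.logb 2 α = -((d : ℝ) / 2 ^ d) := by
    rw [hαdef, Real.logb_rpow (by norm_num) (by norm_num)]
  have hlogβ : -Real.logb 2 (1 - α) ≤ d := by
    have h := Real.logb_le_logb_of_le (b := 2) (by norm_num) (by positivity) hβ
    rw [Real.logb_rpow (by norm_num) (by norm_num)] at h
    linarith
  -- the indices removed from `D` by the positive example at time `t`
  set F : Fin n → Finset (Fin d) := fun t =>
    Finset.univ.filter (fun i => x t = true ∧ i ∈ D t ∧ a t i = false) with hF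
  -- the rounds with a fresh negative instance
  set N : Finset (Fin n) := Finset.univ.filter
    (fun t => x t = false ∧ ¬ ∃ τ, τ < t ∧ x τ = false ∧ a τ = a t) with hN
  have hFcard : ∑ t, (F t).card ≤ d := by
    have key : ∀ t t', t < t' → Disjoint (F t) (F t') := by
      intro t t' h
      rw [Finset.disjoint_left]
      intro i hi hi'
      simp only [hF, hD, Finset.mem_filter, Finset.mem_univ, true_and] at hi hi'
      have := hi'.2.1 t h hi.1
      simp [hi.2.2] at this
    rw [← Finset.card_biUnion]
    · exact (Finset.card_le_univ _).trans (by simp)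
    · intro t _ t' _ hne
      rcases lt_or_gt_of_ne hne with h | h
      · exact key _ _ h
      · exact (key _ _ h).symm
  have hNcard : N.card ≤ 2 ^ d := by
    have hinj : Set.InjOn a N := by
      intro t ht t' ht' h
      simp only [hN, Finset.coe_filter, Finset.mem_univ, true_and, Set.mem_ofPred_eq] at ht ht'
      rcases lt_trichotomy t t' with h1 | h1 | h1
      · exact absurd ⟨t, h1, ht.1, h⟩ ht'.2
      · exact h1
      · exact absurd ⟨t', h1, ht'.1, h.symm⟩ ht.2
    rw [← Finset.card_image_of_injOn hinj]
    exact (Finset.card_le_univ _).trans (by simp)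
  have hqpow : ∀ t, q t = (1 - α) ^ ((D t).filter (fun i => a t i = false)).card := by
    intro t
    rw [hq, ← Finset.prod_const, Finset.prod_filter]
    refine Finset.prod_congr rfl fun i _ => ?_
    cases a t i <;> simp
  have hSD : ∀ t, S ⊆ D t := by
    intro t i hi
    simp only [hD, Finset.mem_filter, Finset.mem_univ, true_and]
    intro τ _ hx
    rw [hS, mconj, decide_eq_true_eq] at hx
    exact hx i hi
  have hround : ∀ t, -Real.logb 2 (p t) ≤
      (d : ℝ) * (F t).card + (if t ∈ N then (d : ℝ) / 2 ^ d else 0) := by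
    intro t
    have hnn : (0 : ℝ) ≤ (if t ∈ N then (d : ℝ) / 2 ^ d else 0) := by
      split_ifs <;> positivity
    rw [hp]
    cases hx : x t with
    | true =>
      -- labels are a function of the instance, so a positive instance is never memorized
      have hno : ¬ ∃ τ, τ < t ∧ x τ = false ∧ a τ = a t := by
        rintro ⟨τ, _, h1, h2⟩
        rw [hS, h2, ← hS, hx] at h1
        cases h1
      have hFt : F t = (D t).filter (fun i => a t i = false) := by
        ext i; simp [hF, hx]
      rw [if_neg hno, if_pos rfl, hqpow, ← hFt, Real.logb_pow]
      have : ((F t).card : ℝ) * (-Real.logb 2 (1 - α)) ≤ (F t).card * d := by gcongr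
      linarith
    | false =>
      have hc : (0 : ℝ) ≤ (d : ℝ) * (F t).card := by positivity
      by_cases hA : ∃ τ, τ < t ∧ x τ = false ∧ a τ = a t
      · rw [if_pos hA, if_pos rfl, Real.logb_one]
        linarith
      · have htN : t ∈ N := by
          simp only [hN, Finset.mem_filter, Finset.mem_univ, true_and]
          exact ⟨hx, hA⟩
        rw [if_neg hA, if_neg (by simp), if_pos htN]
        -- some relevant variable is violated, and it has not been ruled out
        obtain ⟨i, hiS, hi⟩ : ∃ i ∈ S, a t i = false := by
          have h := hS t
          rw [hx, eq_comm, mconj, decide_eq_false_iff_not] at h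
          push Not at h
          simpa using h
        have hcard : ((D t).filter (fun i => a t i = false)).card ≠ 0 :=
          Finset.card_ne_zero_of_mem (Finset.mem_filter.2 ⟨hSD t hiS, hi⟩)
        have hqle : q t ≤ 1 - α := by
          rw [hqpow]
          exact pow_le_of_le_one hβ0.le (by linarith) hcard
        have h := Real.logb_le_logb_of_le (b := 2) (by norm_num) hα0
          (show α ≤ 1 - q t by linarith)
        rw [hlogα] at h
        linarith
  have hF' : (∑ t, ((F t).card : ℝ)) ≤ d := by exact_mod_cast hFcard
  have hN' : (N.card : ℝ) ≤ 2 ^ d := by exact_mod_cast hNcard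
  calc ∑ t, -Real.logb 2 (p t)
      ≤ ∑ t, ((d : ℝ) * (F t).card + (if t ∈ N then (d : ℝ) / 2 ^ d else 0)) :=
        Finset.sum_le_sum fun t _ => hround t
    _ = d * ∑ t, ((F t).card : ℝ) + N.card * ((d : ℝ) / 2 ^ d) := by
        rw [Finset.sum_add_distrib, ← Finset.mul_sum]
        simp
    _ ≤ d * d + 2 ^ d * ((d : ℝ) / 2 ^ d) := by gcongr
    _ = d * d + d := by rw [mul_div_cancel₀ _ hpos.ne']
    _ ≤ 2 * (d : ℝ) ^ 2 := by nlinarith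
end

section
/- Let d, n ≥ 1 be integers, let a_1,…,a_n ∈ {0,1}^d, and suppose x_1,…,x_n ∈ {0,1} are generated by a monotone conjunction: there exists S* ⊆ {1,…,d} with x_t = h_{S*}(a_t) for all t. For each t define D_t := {i ∈ {1,…,d} : a_τ^i = 1 for every τ < t with x_τ = 1}, define the deterministic prediction b_t := ⋀_{i∈D_t} a_t^i, and the predicted probability p_t := t/(t+1) if b_t = x_t and p_t := 1/(t+1) otherwise. Then the cumulative log-loss satisfies Σ_{t=1}^n −log₂ p_t ≤ (d+1)·log₂(n+1). -/
/-- The longest-conjunction predictor errs in at most `d` rounds. -/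
lemma card_mistakes_le {d n : ℕ} (a : Fin n → Fin d → Bool) (x : Fin n → Bool)
    (hgen : ∃ Sstar : Finset (Fin d), ∀ t, x t = mconj Sstar (a t))
    (D : Fin n → Finset (Fin d))
    (hD : ∀ t, D t = Finset.univ.filter
        (fun i : Fin d => ∀ τ, τ < t → x τ = true → a τ i = true))
    (b : Fin n → Bool) (hb : ∀ t, b t = mconj (D t) (a t)) :
    (Finset.univ.filter (fun t => b t ≠ x t)).card ≤ d := by
  obtain ⟨S, hS⟩ := hgen
  have hx : ∀ t, x t = true ↔ ∀ i ∈ S, a t i = true := fun t => by simp [hS t, mconj]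
  have hb' : ∀ t, b t = true ↔ ∀ i ∈ D t, a t i = true := fun t => by simp [hb t, mconj]
  have hmem : ∀ t i, i ∈ D t ↔ ∀ τ, τ < t → x τ = true → a τ i = true :=
    fun t i => by simp [hD t]
  have hSD : ∀ t, S ⊆ D t := fun t i hi => (hmem t i).2 fun τ _ h => (hx τ).1 h i hi
  have hbx : ∀ t, b t = true → x t = true :=
    fun t h => (hx t).2 fun i hi => (hb' t).1 h i (hSD t hi)
  have key : ∀ t, ∃ i : Option (Fin d), b t ≠ x t →
      x t = true ∧ ∃ j ∈ D t, i = some j ∧ a t j = false := by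
    intro t
    by_cases h : b t = x t
    · exact ⟨none, fun h' => absurd h h'⟩
    · have hbf : ¬ b t = true := fun h1 => h (h1.trans (hbx t h1).symm)
      have hxt : x t = true := by
        by_contra h2
        exact h (by rw [Bool.eq_false_of_not_eq_true hbf, Bool.eq_false_of_not_eq_true h2])
      rw [hb'] at hbf
      push Not at hbf
      obtain ⟨j, hj, hja⟩ := hbf
      exact ⟨some j, fun _ => ⟨hxt, j, hj, rfl, Bool.eq_false_of_not_eq_true hja⟩⟩
  choose f hf using key
  -- An index eliminated at round `s` does not belong to `D t` for `t > s`.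
  have hne : ∀ s t, b s ≠ x s → b t ≠ x t → s < t → f s ≠ f t := by
    intro s t hs ht hst heq
    obtain ⟨hxs, j, -, hj, hja⟩ := hf s hs
    obtain ⟨-, k, hk, hk', -⟩ := hf t ht
    obtain rfl : j = k := Option.some.inj (hj.symm.trans (heq.trans hk'))
    simp [(hmem t j).1 hk s hst hxs] at hja
  calc (Finset.univ.filter (fun t => b t ≠ x t)).card
      ≤ (Finset.univ.image (some : Fin d → Option (Fin d))).card := by
        refine Finset.card_le_card_of_injOn f ?_ ?_
        · intro t ht
          obtain ⟨-, j, -, hj, -⟩ := hf t (by simpa using ht)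
          simp [hj]
        · intro s hs t ht heq
          have hs' : b s ≠ x s := by simpa using hs
          have ht' : b t ≠ x t := by simpa using ht
          rcases lt_trichotomy s t with h | h | h
          · exact absurd heq (hne s t hs' ht' h)
          · exact h
          · exact absurd heq.symm (hne t s ht' hs' h)
    _ ≤ d := Finset.card_image_le.trans (by simp)

theorem stmt_17 (d n : ℕ) (hd : 1 ≤ d) (hn : 1 ≤ n)
    (a : Fin n → Fin d → Bool) (x : Fin n → Bool)
    (hgen : ∃ Sstar : Finset (Fin d), ∀ t, x t = mconj Sstar (a t))
    (D : Fin n → Finset (Fin d))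
    (hD : ∀ t, D t = Finset.univ.filter
        (fun i : Fin d => ∀ τ, τ < t → x τ = true → a τ i = true))
    (b : Fin n → Bool)
    (hb : ∀ t, b t = mconj (D t) (a t))
    (p : Fin n → ℝ)
    (hp : ∀ t : Fin n, p t =
      if b t = x t then ((t : ℝ) + 1) / ((t : ℝ) + 2)
      else 1 / ((t : ℝ) + 2)) :
    ∑ t : Fin n, (- Real.logb 2 (p t)) ≤ ((d : ℝ) + 1) * Real.logb 2 (n + 1) := by
  have hcard := card_mistakes_le a x hgen D hD b hb
  have hL : 0 ≤ Real.logb 2 ((n : ℝ) + 1) :=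
    Real.logb_nonneg (by norm_num) (by linarith [Nat.cast_nonneg (α := ℝ) n])
  have hterm : ∀ t : Fin n, - Real.logb 2 (p t) ≤
      (Real.logb 2 (((t : ℕ) + 1 : ℕ) + 1 : ℝ) - Real.logb 2 ((t : ℕ) + 1 : ℝ)) +
        if b t ≠ x t then Real.logb 2 ((n : ℝ) + 1) else 0 := by
    intro t
    have h1 : (0 : ℝ) < (t : ℕ) + 1 := by positivity
    have h2 : (0 : ℝ) < (t : ℕ) + 2 := by positivity
    have h3 : (((t : ℕ) + 1 : ℕ) + 1 : ℝ) = (t : ℕ) + 2 := by push_cast; ring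
    rw [hp t, h3]
    by_cases h : b t = x t
    · simp only [h, if_true, ne_eq, not_true_eq_false, if_false]
      rw [Real.logb_div h1.ne' h2.ne']
      linarith
    · simp only [h, if_false, ne_eq, not_false_eq_true, if_true]
      rw [Real.logb_div one_ne_zero h2.ne', Real.logb_one]
      have htn : ((t : ℕ) : ℝ) ≤ n := by exact_mod_cast t.2.le
      have := Real.logb_le_logb_of_le (b := 2) (by norm_num) h1
        (by linarith : ((t : ℕ) : ℝ) + 1 ≤ n + 1)
      linarith
  have htel : ∑ t : Fin n,
      (Real.logb 2 (((t : ℕ) + 1 : ℕ) + 1 : ℝ) - Real.logb 2 ((t : ℕ) + 1 : ℝ)) =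
        Real.logb 2 ((n : ℝ) + 1) := by
    rw [Fin.sum_univ_eq_sum_range (fun t : ℕ =>
        Real.logb 2 ((t + 1 : ℕ) + 1 : ℝ) - Real.logb 2 ((t : ℝ) + 1)) n,
      Finset.sum_range_sub (fun t : ℕ => Real.logb 2 ((t : ℝ) + 1))]
    simp
  refine (Finset.sum_le_sum fun t _ => hterm t).trans ?_
  rw [Finset.sum_add_distrib, htel, ← Finset.sum_filter, Finset.sum_const, nsmul_eq_mul]
  have := mul_le_mul_of_nonneg_right (Nat.cast_le (α := ℝ).2 hcard) hL
  linarith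
end

section
/- Fix integers k, d, n ≥ 1. Let C := ({1,…,d} × {0,1})^k be the set of (2d)^k syntactically distinct k-literal clauses, and for c = ((i_1,s_1),…,(i_k,s_k)) ∈ C and a ∈ {0,1}^d define the clause evaluation eval(c, a) := ⋁_{j=1}^k ℓ_j where ℓ_j = a^{i_j} if s_j = 1 and ℓ_j = ¬a^{i_j} if s_j = 0. Let a_1,…,a_n ∈ {0,1}^d and suppose x_1,…,x_n ∈ {0,1} are generated by a k-CNF: there exists S* ⊆ C with x_t = ⋀_{c∈S*} eval(c, a_t) for all t. For each t define D_t := {c ∈ C : eval(c, a_τ) = 1 for every τ < t with x_τ = 1}, b_t := ⋀_{c∈D_t} eval(c, a_t), and p_t := t/(t+1) if b_t = x_t and p_t := 1/(t+1) otherwise. Then the cumulative log-loss satisfies Σ_{t=1}^n −log₂ p_t ≤ (2^k d^k + 1)·log₂(n+1). -/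
/-!
The predictor errs in round `t` only when `x t` is true and `b t` is false: every clause of the
target conjunction survives in `D t`, so `x t = false` forces `b t = false`. At an erroneous round
some clause of `D t` is falsified by `a t`; since `x t` is true this clause is absent from every
later `D s`, so distinct errors have distinct witnessing clauses and there are at most `(2d)^k`
of them. In each round the loss is at most `log₂ ((t+2)/(t+1))`, plus `log₂ (n+1)` if it is an
erroneous one; the first terms telescope to `log₂ (n+1)`.
-/


/-- Evaluation of the `k`-literal clause `c` on the assignment `a`:
`eval(c, a) = ⋁_j ℓ_j`, where the `j`-th literal `ℓ_j` is `a^{i_j}` if `s_j = 1`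
and `¬ a^{i_j}` if `s_j = 0`, for `c j = (i_j, s_j)`. -/
def evalClause {k d : ℕ} (c : Fin k → Fin d × Bool) (a : Fin d → Bool) : Bool :=
  decide (∃ j : Fin k, a (c j).1 = (c j).2)

theorem stmt_19 (k d n : ℕ) (hk : 1 ≤ k) (hd : 1 ≤ d) (hn : 1 ≤ n)
    (a : Fin n → Fin d → Bool) (x : Fin n → Bool)
    (hgen : ∃ Sstar : Finset (Fin k → Fin d × Bool),
      ∀ t, x t = decide (∀ c ∈ Sstar, evalClause c (a t) = true))
    (D : Fin n → Finset (Fin k → Fin d × Bool))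
    (hD : ∀ t, D t = Finset.univ.filter
        (fun c : Fin k → Fin d × Bool =>
          ∀ τ, τ < t → x τ = true → evalClause c (a τ) = true))
    (b : Fin n → Bool)
    (hb : ∀ t, b t = decide (∀ c ∈ D t, evalClause c (a t) = true))
    (p : Fin n → ℝ)
    (hp : ∀ t : Fin n, p t =
      if b t = x t then ((t : ℝ) + 1) / ((t : ℝ) + 2)
      else 1 / ((t : ℝ) + 2)) :
    ∑ t : Fin n, (- Real.logb 2 (p t))
      ≤ ((2 : ℝ) ^ k * (d : ℝ) ^ k + 1) * Real.logb 2 (n + 1) := by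
  classical
  obtain ⟨S, hS⟩ := hgen
  have key : ∀ t, b t ≠ x t →
      x t = true ∧ ∃ c ∈ D t, ¬ evalClause c (a t) = true := by
    intro t ht
    have hSD : ∀ c ∈ S, c ∈ D t := by
      intro c hc
      rw [hD]
      refine Finset.mem_filter.2 ⟨Finset.mem_univ _, fun τ _ hx => ?_⟩
      rw [hS] at hx
      exact of_decide_eq_true hx c hc
    by_cases hbt : b t = true
    · exfalso
      apply ht
      rw [hbt, hS, eq_comm]
      rw [hb] at hbt
      exact decide_eq_true fun c hc => of_decide_eq_true hbt c (hSD c hc)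
    · have hxt : x t = true := by
        cases h : x t
        · exact absurd (by rw [h]; simpa using hbt) ht
        · rfl
      refine ⟨hxt, ?_⟩
      rw [hb] at hbt
      by_contra! h
      exact hbt (decide_eq_true h)
  choose hx1 f hfD hfe using key
  set M : Finset (Fin n) := Finset.univ.filter (fun t => b t ≠ x t) with hM
  have hmem : ∀ t ∈ M, b t ≠ x t := fun t ht => (Finset.mem_filter.1 ht).2
  have hlt : ∀ s t (hs : b s ≠ x s) (ht : b t ≠ x t), s < t → f s hs ≠ f t ht := by
    intro s t hs ht hst he
    have h := hfD t ht
    rw [hD] at h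
    have h2 := (Finset.mem_filter.1 h).2 s hst (hx1 s hs)
    rw [← he] at h2
    exact hfe s hs h2
  have hcard : M.card ≤ (2 * d) ^ k := by
    have h : M.attach.card ≤
        (Finset.univ : Finset (Fin k → Fin d × Bool)).card := by
      refine Finset.card_le_card_of_injOn (fun t => f t.1 (hmem t.1 t.2))
        (fun _ _ => Finset.mem_coe.2 (Finset.mem_univ _)) ?_
      intro s _ t _ he
      rcases lt_trichotomy s.1 t.1 with h | h | h
      · exact absurd he (hlt _ _ _ _ h)
      · exact Subtype.ext h
      · exact absurd he.symm (hlt _ _ _ _ h)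
    simpa [mul_comm] using h
  set L := Real.logb 2 ((n : ℝ) + 1) with hL
  have hL0 : 0 ≤ L := Real.logb_nonneg (by norm_num) (by simp)
  have hstep : ∀ t : Fin n, - Real.logb 2 (p t) ≤
      (Real.logb 2 (((t : ℕ) + 1 : ℕ) + 1 : ℝ) - Real.logb 2 (((t : ℕ) : ℝ) + 1))
        + (if b t ≠ x t then L else 0) := by
    intro t
    have h1 : (0 : ℝ) < ((t : ℕ) : ℝ) + 1 := by positivity
    have h2 : (0 : ℝ) < ((t : ℕ) : ℝ) + 2 := by positivity
    have h3 : ((((t : ℕ) + 1 : ℕ) : ℝ) + 1) = ((t : ℕ) : ℝ) + 2 := by push_cast; ring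
    rw [hp, h3]
    by_cases h : b t = x t
    · simp only [h, if_true, ne_eq, not_true_eq_false, if_false]
      rw [Real.logb_div h1.ne' h2.ne']
      linarith
    · simp only [h, if_false, ne_eq, not_false_eq_true, if_true]
      rw [Real.logb_div one_ne_zero h2.ne', Real.logb_one]
      have : Real.logb 2 (((t : ℕ) : ℝ) + 1) ≤ L := by
        apply Real.logb_le_logb_of_le (by norm_num) h1
        have : ((t : ℕ) : ℝ) ≤ n := by exact_mod_cast t.2.le
        linarith
      linarith
  have htel : ∑ t : Fin n,
      (Real.logb 2 (((t : ℕ) + 1 : ℕ) + 1 : ℝ) - Real.logb 2 (((t : ℕ) : ℝ) + 1)) = L := by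
    rw [Fin.sum_univ_eq_sum_range
      (fun i : ℕ => Real.logb 2 ((i + 1 : ℕ) + 1 : ℝ) - Real.logb 2 ((i : ℝ) + 1)) n,
      Finset.sum_range_sub (fun i : ℕ => Real.logb 2 ((i : ℝ) + 1))]
    simp [hL]
  have hcardR : (M.card : ℝ) ≤ (2 : ℝ) ^ k * (d : ℝ) ^ k := by
    rw [← mul_pow]
    exact_mod_cast hcard
  calc ∑ t : Fin n, (- Real.logb 2 (p t)) ≤ _ := Finset.sum_le_sum fun t _ => hstep t
    _ = L + M.card * L := by
      rw [Finset.sum_add_distrib, htel, ← Finset.sum_filter, Finset.sum_const, nsmul_eq_mul]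
    _ ≤ ((2 : ℝ) ^ k * (d : ℝ) ^ k + 1) * L := by nlinarith
end
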